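/- Fix d ≥ 1, constants μ > 0, a > 0, γ > 1, and pressure p(s) = a s^γ. Let (ρ₁, u₁) and (ρ₂, u₂) be two smooth, ℤ^d-periodic-in-x solutions on [0,T] × ℝ^d of the compressible Navier–Stokes system ∂t ρ + div(ρu) = 0, ∂t(ρu) + div(ρ u ⊗ u) + ∇p(ρ) − 2μ div(ρ D(u)) = 0, with ρ₁ and ρ₂ bounded below by positive constants. If (ρ₁, u₁)(0,·) = (ρ₂, u₂)(0,·), then (ρ₁, u₁) = (ρ₂, u₂) on all of [0,T] × ℝ^d. -/

import Mathlib

open Real MeasureTheory Set Filter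

noncomputable section

variable {d : ℕ}

/-- `i`-th partial derivative of a scalar function on `ℝᵈ`. -/
def sder (i : Fin d) (f : (Fin d → ℝ) → ℝ) (x : Fin d → ℝ) : ℝ :=
  fderiv ℝ f x (Pi.single i 1)

/-- Jacobian matrix of a vector field on `ℝᵈ`: `(∇u)_{ij} = ∂_j u_i`. -/
def sjac (u : (Fin d → ℝ) → Fin d → ℝ) (x : Fin d → ℝ) : Fin d → Fin d → ℝ :=
  fun i j => sder j (fun y => u y i) x

/-- Symmetric gradient `D(u) = (∇u + (∇u)ᵀ)/2` of a vector field on `ℝᵈ`. -/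
def sD (u : (Fin d → ℝ) → Fin d → ℝ) (x : Fin d → ℝ) : Fin d → Fin d → ℝ :=
  fun i j => (sjac u x i j + sjac u x j i) / 2

/-- Antisymmetric gradient `A(u) = (∇u - (∇u)ᵀ)/2` of a vector field on `ℝᵈ`. -/
def sA (u : (Fin d → ℝ) → Fin d → ℝ) (x : Fin d → ℝ) : Fin d → Fin d → ℝ :=
  fun i j => (sjac u x i j - sjac u x j i) / 2

/-- Time derivative `∂ₜ f` of a scalar function on `ℝ × ℝᵈ`. -/
def tder (f : ℝ × (Fin d → ℝ) → ℝ) (z : ℝ × (Fin d → ℝ)) : ℝ :=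
  fderiv ℝ f z (1, 0)

/-- `i`-th spatial partial derivative `∂ᵢ f` of a scalar function on `ℝ × ℝᵈ`. -/
def xder (i : Fin d) (f : ℝ × (Fin d → ℝ) → ℝ) (z : ℝ × (Fin d → ℝ)) : ℝ :=
  fderiv ℝ f z (0, Pi.single i 1)

/-- Spatial divergence of a (time-dependent) vector field. -/
def xdiv (u : ℝ × (Fin d → ℝ) → Fin d → ℝ) (z : ℝ × (Fin d → ℝ)) : ℝ :=
  ∑ i, xder i (fun y => u y i) z

/-- Spatial Jacobian matrix `(∇u)_{ij} = ∂_j u_i` of a (time-dependent) vector field. -/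
def xjac (u : ℝ × (Fin d → ℝ) → Fin d → ℝ) (z : ℝ × (Fin d → ℝ)) : Fin d → Fin d → ℝ :=
  fun i j => xder j (fun y => u y i) z

/-- Symmetric gradient `D(u) = (∇u + (∇u)ᵀ)/2` of a (time-dependent) vector field. -/
def xD (u : ℝ × (Fin d → ℝ) → Fin d → ℝ) (z : ℝ × (Fin d → ℝ)) : Fin d → Fin d → ℝ :=
  fun i j => (xjac u z i j + xjac u z j i) / 2

/-- Antisymmetric gradient `A(u) = (∇u - (∇u)ᵀ)/2` of a (time-dependent) vector field. -/
def xA (u : ℝ × (Fin d → ℝ) → Fin d → ℝ) (z : ℝ × (Fin d → ℝ)) : Fin d → Fin d → ℝ :=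
  fun i j => (xjac u z i j - xjac u z j i) / 2

/-- Divergence of a matrix field: `(div M)ᵢ = ∑ⱼ ∂ⱼ M_{ij}`. -/
def mdiv (M : ℝ × (Fin d → ℝ) → Fin d → Fin d → ℝ) (z : ℝ × (Fin d → ℝ)) : Fin d → ℝ :=
  fun i => ∑ j, xder j (fun y => M y i j) z

/-- Euclidean inner product on `ℝᵈ`. -/
def dotv (a b : Fin d → ℝ) : ℝ := ∑ i, a i * b i

/-- Frobenius inner product of `d × d` matrices. -/
def frob (M N : Fin d → Fin d → ℝ) : ℝ := ∑ i, ∑ j, M i j * N i j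

/-- The unit box `[0,1]ᵈ`. -/
def box (d : ℕ) : Set (Fin d → ℝ) := Set.univ.pi fun _ => Set.Icc (0 : ℝ) 1

/-- `ℤᵈ`-periodicity in the space variable for scalar functions on `ℝ × ℝᵈ`. -/
def PeriodicX (f : ℝ × (Fin d → ℝ) → ℝ) : Prop :=
  ∀ (t : ℝ) (x : Fin d → ℝ) (k : Fin d → ℤ), f (t, x + fun i => (k i : ℝ)) = f (t, x)

/-- Mass conservation equation `∂ₜ ρ + div (ρ u) = 0` at the point `z`. -/
def MassEq (ρ : ℝ × (Fin d → ℝ) → ℝ) (u : ℝ × (Fin d → ℝ) → Fin d → ℝ)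
    (z : ℝ × (Fin d → ℝ)) : Prop :=
  tder ρ z + xdiv (fun y j => ρ y * u y j) z = 0

/-- Momentum equation `∂ₜ(ρu) + div(ρ u ⊗ u) + ∇(a ρ^γ) - 2 μ div(ρ D(u)) = 0`
at the point `z`. -/
def MomEq (μ a γ : ℝ) (ρ : ℝ × (Fin d → ℝ) → ℝ) (u : ℝ × (Fin d → ℝ) → Fin d → ℝ)
    (z : ℝ × (Fin d → ℝ)) : Prop :=
  ∀ i, tder (fun y => ρ y * u y i) z
      + mdiv (fun y i j => ρ y * u y i * u y j) z i
      + xder i (fun y => a * ρ y ^ γ) z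
      - 2 * μ * mdiv (fun y i j => ρ y * xD u y i j) z i = 0

/-- Compressible Euler momentum equation `∂ₜ(ρu) + div(ρ u ⊗ u) + ∇(a ρ^γ) = 0`
at the point `z`. -/
def EulerMomEq (a γ : ℝ) (ρ : ℝ × (Fin d → ℝ) → ℝ) (u : ℝ × (Fin d → ℝ) → Fin d → ℝ)
    (z : ℝ × (Fin d → ℝ)) : Prop :=
  ∀ i, tder (fun y => ρ y * u y i) z
      + mdiv (fun y i j => ρ y * u y i * u y j) z i
      + xder i (fun y => a * ρ y ^ γ) z = 0

/-- Directional derivative. -/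
def dd (v : ℝ × (Fin d → ℝ)) (f : ℝ × (Fin d → ℝ) → ℝ) (z : ℝ × (Fin d → ℝ)) : ℝ :=
  fderiv ℝ f z v

/-- Smoothness. -/
abbrev Sm (f : ℝ × (Fin d → ℝ) → ℝ) : Prop := ContDiff ℝ (⊤ : ℕ∞) f

lemma Sm.da {f : ℝ × (Fin d → ℝ) → ℝ} (h : Sm f) (z) : DifferentiableAt ℝ f z :=
  (h.differentiable (by simp)) z

lemma dd_add {f g : ℝ × (Fin d → ℝ) → ℝ} (hf : Sm f) (hg : Sm g) (v z) :
    dd v (fun y => f y + g y) z = dd v f z + dd v g z := by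
  unfold dd; rw [fderiv_fun_add (hf.da z) (hg.da z)]; rfl

lemma dd_sub {f g : ℝ × (Fin d → ℝ) → ℝ} (hf : Sm f) (hg : Sm g) (v z) :
    dd v (fun y => f y - g y) z = dd v f z - dd v g z := by
  unfold dd; rw [fderiv_fun_sub (hf.da z) (hg.da z)]; rfl

lemma dd_mul {f g : ℝ × (Fin d → ℝ) → ℝ} (hf : Sm f) (hg : Sm g) (v z) :
    dd v (fun y => f y * g y) z = dd v f z * g z + f z * dd v g z := by
  unfold dd; rw [fderiv_fun_mul (hf.da z) (hg.da z)]; simp; ring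

lemma dd_cmul {f : ℝ × (Fin d → ℝ) → ℝ} (hf : Sm f) (c : ℝ) (v z) :
    dd v (fun y => c * f y) z = c * dd v f z := by
  unfold dd; rw [fderiv_const_mul (hf.da z)]; simp

lemma dd_sum {ι : Type} [Fintype ι] {f : ι → ℝ × (Fin d → ℝ) → ℝ} (hf : ∀ i, Sm (f i)) (v z) :
    dd v (fun y => ∑ i, f i y) z = ∑ i, dd v (f i) z := by
  unfold dd; rw [fderiv_fun_sum (fun i _ => (hf i).da z)]; simp

lemma dd_sm {f : ℝ × (Fin d → ℝ) → ℝ} (hf : Sm f) (v) : Sm (dd v f) := by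
  unfold dd
  exact (hf.fderiv_right (m := (⊤ : ℕ∞)) (by simp)).clm_apply contDiff_const

lemma dd_per {f : ℝ × (Fin d → ℝ) → ℝ} (hf : PeriodicX f) (v) : PeriodicX (dd v f) := by
  intro t x k
  unfold dd
  have h : (fun z : ℝ × (Fin d → ℝ) => f (z + (0, fun i => (k i : ℝ)))) = f := by
    funext z
    obtain ⟨s, y⟩ := z
    simpa using hf s y k
  have := fderiv_comp_add_right (𝕜 := ℝ) (f := f) (x := (t, x)) (0, fun i => (k i : ℝ))
  rw [h] at this
  rw [this]
  simp

lemma tder_eq (f : ℝ × (Fin d → ℝ) → ℝ) (z) : tder f z = dd (1, 0) f z := rfl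

lemma xder_eq (i) (f : ℝ × (Fin d → ℝ) → ℝ) (z) :
    xder i f z = dd (0, Pi.single i 1) f z := rfl

lemma xD_sm {u : ℝ × (Fin d → ℝ) → Fin d → ℝ} (hu : ∀ i, Sm fun z => u z i) (i j) :
    Sm fun z => xD u z i j := by
  have := (dd_sm (hu i) (0, Pi.single j 1)).add (dd_sm (hu j) (0, Pi.single i 1))
  exact this.div_const 2

/-- Mass equation, expanded. -/
lemma mass_expand {ρ : ℝ × (Fin d → ℝ) → ℝ} {u : ℝ × (Fin d → ℝ) → Fin d → ℝ} {z}
    (hρ : Sm ρ) (hu : ∀ i, Sm fun z => u z i) (h : MassEq ρ u z) :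
    tder ρ z + ∑ j, (xder j ρ z * u z j + ρ z * xder j (fun y => u y j) z) = 0 := by
  unfold MassEq xdiv at h
  rw [← h]
  congr 1
  refine Finset.sum_congr rfl fun j _ => ?_
  exact (dd_mul hρ (hu j) _ _).symm

lemma mom_expand {μ a γ : ℝ} {ρ : ℝ × (Fin d → ℝ) → ℝ} {u : ℝ × (Fin d → ℝ) → Fin d → ℝ} {z}
    (hρ : Sm ρ) (hu : ∀ i, Sm fun z => u z i) (h : MassEq ρ u z) (h' : MomEq μ a γ ρ u z) (i) :
    ρ z * (tder (fun y => u y i) z + ∑ j, u z j * xder j (fun y => u y i) z)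
      + xder i (fun y => a * ρ y ^ γ) z
      - 2 * μ * ∑ j, xder j (fun y => ρ y * xD u y i j) z = 0 := by
  have hm := mass_expand hρ hu h
  have h1 := h' i
  unfold mdiv at h1
  have e1 : tder (fun y => ρ y * u y i) z = tder ρ z * u z i + ρ z * tder (fun y => u y i) z :=
    dd_mul hρ (hu i) _ _
  have e2 : ∑ j, xder j (fun y => ρ y * u y i * u y j) z
      = u z i * ∑ j, (xder j ρ z * u z j + ρ z * xder j (fun y => u y j) z)
        + ρ z * ∑ j, u z j * xder j (fun y => u y i) z := by
    rw [Finset.mul_sum, Finset.mul_sum, ← Finset.sum_add_distrib]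
    refine Finset.sum_congr rfl fun j _ => ?_
    simp only [xder_eq]
    rw [dd_mul (hρ.mul (hu i)) (hu j), dd_mul hρ (hu i)]
    ring
  rw [e1, e2] at h1
  linear_combination h1 - u z i * hm

/-- The relative energy density. -/
def eden (ρ₁ ρ₂ : ℝ × (Fin d → ℝ) → ℝ) (u₁ u₂ : ℝ × (Fin d → ℝ) → Fin d → ℝ)
    (z : ℝ × (Fin d → ℝ)) : ℝ :=
  (1 / 2) * ((∑ i, ρ₁ z * ((u₁ z i - u₂ z i) * (u₁ z i - u₂ z i)))
    + (ρ₁ z - ρ₂ z) * (ρ₁ z - ρ₂ z))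

/-- The flux of the relative energy. -/
def flux (μ a γ : ℝ) (ρ₁ ρ₂ : ℝ × (Fin d → ℝ) → ℝ) (u₁ u₂ : ℝ × (Fin d → ℝ) → Fin d → ℝ)
    (z : ℝ × (Fin d → ℝ)) (j : Fin d) : ℝ :=
  eden ρ₁ ρ₂ u₁ u₂ z * u₁ z j + (a * ρ₁ z ^ γ - a * ρ₂ z ^ γ) * (u₁ z j - u₂ z j)
    - 2 * μ * ∑ i, (ρ₁ z * xD u₁ z i j - ρ₂ z * xD u₂ z i j) * (u₁ z i - u₂ z i)

lemma eden_sm {ρ₁ ρ₂ : ℝ × (Fin d → ℝ) → ℝ} {u₁ u₂ : ℝ × (Fin d → ℝ) → Fin d → ℝ}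
    (hρ₁ : Sm ρ₁) (hρ₂ : Sm ρ₂) (hu₁ : ∀ i, Sm fun z => u₁ z i) (hu₂ : ∀ i, Sm fun z => u₂ z i) :
    Sm (eden ρ₁ ρ₂ u₁ u₂) := by
  unfold eden
  refine contDiff_const.mul ((ContDiff.sum fun i _ => hρ₁.mul (((hu₁ i).sub (hu₂ i)).mul
    ((hu₁ i).sub (hu₂ i)))).add ((hρ₁.sub hρ₂).mul (hρ₁.sub hρ₂)))

lemma dd_eden {ρ₁ ρ₂ : ℝ × (Fin d → ℝ) → ℝ} {u₁ u₂ : ℝ × (Fin d → ℝ) → Fin d → ℝ}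
    (hρ₁ : Sm ρ₁) (hρ₂ : Sm ρ₂) (hu₁ : ∀ i, Sm fun z => u₁ z i) (hu₂ : ∀ i, Sm fun z => u₂ z i)
    (v z) :
    dd v (eden ρ₁ ρ₂ u₁ u₂) z = (∑ i, (dd v ρ₁ z * (u₁ z i - u₂ z i) ^ 2 / 2
      + ρ₁ z * (u₁ z i - u₂ z i) * (dd v (fun y => u₁ y i) z - dd v (fun y => u₂ y i) z)))
      + (ρ₁ z - ρ₂ z) * (dd v ρ₁ z - dd v ρ₂ z) := by
  have hw := fun i => (hu₁ i).sub (hu₂ i)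
  have hr := hρ₁.sub hρ₂
  have hs : ∀ i, Sm fun z => ρ₁ z * ((u₁ z i - u₂ z i) * (u₁ z i - u₂ z i)) :=
    fun i => hρ₁.mul ((hw i).mul (hw i))
  have hS : Sm fun z => ∑ i, ρ₁ z * ((u₁ z i - u₂ z i) * (u₁ z i - u₂ z i)) :=
    ContDiff.sum fun i _ => hs i
  unfold eden
  rw [dd_cmul (hS.add (hr.mul hr)), dd_add hS (hr.mul hr), dd_mul hr hr, dd_sub hρ₁ hρ₂, dd_sum hs,
    mul_add, Finset.mul_sum]
  congr 1
  · refine Finset.sum_congr rfl fun i _ => ?_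
    rw [dd_mul hρ₁ ((hw i).mul (hw i)), dd_mul (hw i) (hw i), dd_sub (hu₁ i) (hu₂ i)]
    ring
  · ring

/-- The source term of the relative energy identity. -/
def src (μ a γ : ℝ) (ρ₁ ρ₂ : ℝ × (Fin d → ℝ) → ℝ) (u₁ u₂ : ℝ × (Fin d → ℝ) → Fin d → ℝ)
    (z : ℝ × (Fin d → ℝ)) : ℝ :=
  - (∑ i, ∑ j, ρ₁ z * (u₁ z i - u₂ z i) * (u₁ z j - u₂ z j) * xder j (fun y => u₂ y i) z)
  - (∑ i, (ρ₁ z - ρ₂ z) * (u₁ z i - u₂ z i) *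
      (tder (fun y => u₂ y i) z + ∑ j, u₂ z j * xder j (fun y => u₂ y i) z))
  + (a * ρ₁ z ^ γ - a * ρ₂ z ^ γ - ρ₂ z * (ρ₁ z - ρ₂ z)) *
      ∑ i, (xder i (fun y => u₁ y i) z - xder i (fun y => u₂ y i) z)
  - 2 * μ * (∑ i, ∑ j, (ρ₁ z * xD u₁ z i j - ρ₂ z * xD u₂ z i j) *
      (xder j (fun y => u₁ y i) z - xder j (fun y => u₂ y i) z))
  - (ρ₁ z - ρ₂ z) ^ 2 / 2 * ∑ i, xder i (fun y => u₁ y i) z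
  - ∑ i, (ρ₁ z - ρ₂ z) * (u₁ z i - u₂ z i) * xder i ρ₂ z

lemma flux_sm {μ a γ : ℝ} {ρ₁ ρ₂ : ℝ × (Fin d → ℝ) → ℝ} {u₁ u₂ : ℝ × (Fin d → ℝ) → Fin d → ℝ}
    (hρ₁ : Sm ρ₁) (hρ₂ : Sm ρ₂) (hu₁ : ∀ i, Sm fun z => u₁ z i) (hu₂ : ∀ i, Sm fun z => u₂ z i)
    (hP₁ : Sm fun z => a * ρ₁ z ^ γ) (hP₂ : Sm fun z => a * ρ₂ z ^ γ) (j : Fin d) :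
    Sm fun z => flux μ a γ ρ₁ ρ₂ u₁ u₂ z j := by
  unfold flux
  refine (((eden_sm hρ₁ hρ₂ hu₁ hu₂).mul (hu₁ j)).add ((hP₁.sub hP₂).mul ((hu₁ j).sub (hu₂ j)))).sub
    (contDiff_const.mul (ContDiff.sum fun i _ =>
      ((hρ₁.mul (xD_sm hu₁ i j)).sub (hρ₂.mul (xD_sm hu₂ i j))).mul ((hu₁ i).sub (hu₂ i))))

lemma dd_flux {μ a γ : ℝ} {ρ₁ ρ₂ : ℝ × (Fin d → ℝ) → ℝ} {u₁ u₂ : ℝ × (Fin d → ℝ) → Fin d → ℝ}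
    (hρ₁ : Sm ρ₁) (hρ₂ : Sm ρ₂) (hu₁ : ∀ i, Sm fun z => u₁ z i) (hu₂ : ∀ i, Sm fun z => u₂ z i)
    (hP₁ : Sm fun z => a * ρ₁ z ^ γ) (hP₂ : Sm fun z => a * ρ₂ z ^ γ) (j : Fin d) (v z) :
    dd v (fun z => flux μ a γ ρ₁ ρ₂ u₁ u₂ z j) z =
      dd v (eden ρ₁ ρ₂ u₁ u₂) z * u₁ z j + eden ρ₁ ρ₂ u₁ u₂ z * dd v (fun y => u₁ y j) z
      + (dd v (fun z => a * ρ₁ z ^ γ) z - dd v (fun z => a * ρ₂ z ^ γ) z) * (u₁ z j - u₂ z j)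
      + (a * ρ₁ z ^ γ - a * ρ₂ z ^ γ) * (dd v (fun y => u₁ y j) z - dd v (fun y => u₂ y j) z)
      - 2 * μ * ∑ i, ((dd v (fun z => ρ₁ z * xD u₁ z i j) z - dd v (fun z => ρ₂ z * xD u₂ z i j) z)
          * (u₁ z i - u₂ z i) + (ρ₁ z * xD u₁ z i j - ρ₂ z * xD u₂ z i j) *
          (dd v (fun y => u₁ y i) z - dd v (fun y => u₂ y i) z)) := by
  have hw := fun i => (hu₁ i).sub (hu₂ i)
  have hE := eden_sm hρ₁ hρ₂ hu₁ hu₂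
  have h1 := fun i => hρ₁.mul (xD_sm hu₁ i j)
  have h2 := fun i => hρ₂.mul (xD_sm hu₂ i j)
  have hs := fun i => ((h1 i).sub (h2 i)).mul (hw i)
  have hS : Sm fun z => ∑ i, (ρ₁ z * xD u₁ z i j - ρ₂ z * xD u₂ z i j) * (u₁ z i - u₂ z i) :=
    ContDiff.sum fun i _ => hs i
  unfold flux
  rw [dd_sub ((hE.mul (hu₁ j)).add ((hP₁.sub hP₂).mul (hw j))) (contDiff_const.mul hS),
    dd_add (hE.mul (hu₁ j)) ((hP₁.sub hP₂).mul (hw j)), dd_mul hE (hu₁ j),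
    dd_mul (hP₁.sub hP₂) (hw j), dd_sub hP₁ hP₂, dd_sub (hu₁ j) (hu₂ j), dd_cmul hS, dd_sum hs]
  have : ∀ i, dd v (fun z => (ρ₁ z * xD u₁ z i j - ρ₂ z * xD u₂ z i j) * (u₁ z i - u₂ z i)) z
      = ((dd v (fun z => ρ₁ z * xD u₁ z i j) z - dd v (fun z => ρ₂ z * xD u₂ z i j) z)
          * (u₁ z i - u₂ z i) + (ρ₁ z * xD u₁ z i j - ρ₂ z * xD u₂ z i j) *
          (dd v (fun y => u₁ y i) z - dd v (fun y => u₂ y i) z)) := by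
    intro i
    rw [dd_mul ((h1 i).sub (h2 i)) (hw i), dd_sub (h1 i) (h2 i), dd_sub (hu₁ i) (hu₂ i)]
  rw [Finset.sum_congr rfl fun i _ => this i]
  ring

lemma energy_alg (μ r1 r2 tr1 tr2 p : ℝ) (xr1 xr2 v1 v2 tv1 tv2 q1 q2 : Fin d → ℝ)
    (xv1 xv2 S1 S2 xS1 xS2 : Fin d → Fin d → ℝ)
    (hm1 : tr1 + ∑ j, (xr1 j * v1 j + r1 * xv1 j j) = 0)
    (hm2 : tr2 + ∑ j, (xr2 j * v2 j + r2 * xv2 j j) = 0)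
    (hM1 : ∀ i, r1 * (tv1 i + ∑ j, v1 j * xv1 i j) + q1 i - 2 * μ * ∑ j, xS1 i j = 0)
    (hM2 : ∀ i, r2 * (tv2 i + ∑ j, v2 j * xv2 i j) + q2 i - 2 * μ * ∑ j, xS2 i j = 0) :
    (∑ i, (tr1 * (v1 i - v2 i) ^ 2 / 2 + r1 * (v1 i - v2 i) * (tv1 i - tv2 i)))
      + (r1 - r2) * (tr1 - tr2)
    + ∑ j, (((∑ i, (xr1 j * (v1 i - v2 i) ^ 2 / 2 + r1 * (v1 i - v2 i) * (xv1 i j - xv2 i j)))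
        + (r1 - r2) * (xr1 j - xr2 j)) * v1 j
      + (1 / 2) * ((∑ i, r1 * ((v1 i - v2 i) * (v1 i - v2 i))) + (r1 - r2) * (r1 - r2)) * xv1 j j
      + (q1 j - q2 j) * (v1 j - v2 j) + p * (xv1 j j - xv2 j j)
      - 2 * μ * ∑ i, ((xS1 i j - xS2 i j) * (v1 i - v2 i) + (S1 i j - S2 i j) *
          (xv1 i j - xv2 i j))) =
    - (∑ i, ∑ j, r1 * (v1 i - v2 i) * (v1 j - v2 j) * xv2 i j)
    - (∑ i, (r1 - r2) * (v1 i - v2 i) * (tv2 i + ∑ j, v2 j * xv2 i j))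
    + (p - r2 * (r1 - r2)) * ∑ i, (xv1 i i - xv2 i i)
    - 2 * μ * (∑ i, ∑ j, (S1 i j - S2 i j) * (xv1 i j - xv2 i j))
    - (r1 - r2) ^ 2 / 2 * ∑ i, xv1 i i
    - ∑ i, (r1 - r2) * (v1 i - v2 i) * xr2 i := by
  -- velocity part, row by row
  have A : ∀ i, (tr1 * (v1 i - v2 i) ^ 2 / 2 + r1 * (v1 i - v2 i) * (tv1 i - tv2 i))
      + ∑ j, ((xr1 j * (v1 i - v2 i) ^ 2 / 2 + r1 * (v1 i - v2 i) * (xv1 i j - xv2 i j)) * v1 j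
        + (1 / 2) * (r1 * ((v1 i - v2 i) * (v1 i - v2 i))) * xv1 j j)
      = - (q1 i - q2 i) * (v1 i - v2 i) + 2 * μ * ∑ j, (xS1 i j - xS2 i j) * (v1 i - v2 i)
        - (∑ j, r1 * (v1 i - v2 i) * (v1 j - v2 j) * xv2 i j)
        - (r1 - r2) * (v1 i - v2 i) * (tv2 i + ∑ j, v2 j * xv2 i j) := by
    intro i
    have e1 : ∑ j, ((xr1 j * (v1 i - v2 i) ^ 2 / 2
          + r1 * (v1 i - v2 i) * (xv1 i j - xv2 i j)) * v1 j
        + (1 / 2) * (r1 * ((v1 i - v2 i) * (v1 i - v2 i))) * xv1 j j)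
        = (v1 i - v2 i) ^ 2 / 2 * (∑ j, (xr1 j * v1 j + r1 * xv1 j j))
          + r1 * (v1 i - v2 i) * (∑ j, v1 j * xv1 i j)
          - r1 * (v1 i - v2 i) * (∑ j, v2 j * xv2 i j)
          - ∑ j, r1 * (v1 i - v2 i) * (v1 j - v2 j) * xv2 i j := by
      simp only [Finset.mul_sum, ← Finset.sum_add_distrib, ← Finset.sum_sub_distrib]
      refine Finset.sum_congr rfl fun j _ => ?_
      ring
    have e2 : ∑ j, (xS1 i j - xS2 i j) * (v1 i - v2 i)
        = (v1 i - v2 i) * ((∑ j, xS1 i j) - ∑ j, xS2 i j) := by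
      simp only [Finset.mul_sum, ← Finset.sum_sub_distrib]
      refine Finset.sum_congr rfl fun j _ => ?_
      ring
    rw [e1, e2]
    linear_combination (v1 i - v2 i) ^ 2 / 2 * hm1 + (v1 i - v2 i) * hM1 i - (v1 i - v2 i) * hM2 i
  have B : (r1 - r2) * (tr1 - tr2) + ∑ j, ((r1 - r2) * (xr1 j - xr2 j) * v1 j
      + (1 / 2) * ((r1 - r2) * (r1 - r2)) * xv1 j j)
      = - (r2 * (r1 - r2)) * (∑ i, (xv1 i i - xv2 i i))
        - (r1 - r2) ^ 2 / 2 * (∑ i, xv1 i i)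
        - ∑ i, (r1 - r2) * (v1 i - v2 i) * xr2 i := by
    have e : ∑ j, ((r1 - r2) * (xr1 j - xr2 j) * v1 j
        + (1 / 2) * ((r1 - r2) * (r1 - r2)) * xv1 j j)
        = (r1 - r2) * (∑ j, (xr1 j * v1 j + r1 * xv1 j j))
          - (r1 - r2) * (∑ j, (xr2 j * v2 j + r2 * xv2 j j))
          - (r2 * (r1 - r2)) * (∑ i, (xv1 i i - xv2 i i))
          - (r1 - r2) ^ 2 / 2 * (∑ i, xv1 i i)
          - ∑ i, (r1 - r2) * (v1 i - v2 i) * xr2 i := by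
      simp only [Finset.mul_sum, ← Finset.sum_add_distrib, ← Finset.sum_sub_distrib]
      refine Finset.sum_congr rfl fun j _ => ?_
      ring
    rw [e]
    linear_combination (r1 - r2) * hm1 - (r1 - r2) * hm2
  have A' := Finset.sum_congr (rfl : (Finset.univ : Finset (Fin d)) = Finset.univ) fun i _ => A i
  have C : ∑ j, (((∑ i, (xr1 j * (v1 i - v2 i) ^ 2 / 2
        + r1 * (v1 i - v2 i) * (xv1 i j - xv2 i j)))
        + (r1 - r2) * (xr1 j - xr2 j)) * v1 j
      + (1 / 2) * ((∑ i, r1 * ((v1 i - v2 i) * (v1 i - v2 i))) + (r1 - r2) * (r1 - r2)) * xv1 j j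
      + (q1 j - q2 j) * (v1 j - v2 j) + p * (xv1 j j - xv2 j j)
      - 2 * μ * ∑ i, ((xS1 i j - xS2 i j) * (v1 i - v2 i) + (S1 i j - S2 i j) *
          (xv1 i j - xv2 i j)))
      = (∑ i, ∑ j, ((xr1 j * (v1 i - v2 i) ^ 2 / 2
            + r1 * (v1 i - v2 i) * (xv1 i j - xv2 i j)) * v1 j
          + (1 / 2) * (r1 * ((v1 i - v2 i) * (v1 i - v2 i))) * xv1 j j))
        + (∑ j, ((r1 - r2) * (xr1 j - xr2 j) * v1 j
          + (1 / 2) * ((r1 - r2) * (r1 - r2)) * xv1 j j))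
        + (∑ j, (q1 j - q2 j) * (v1 j - v2 j))
        + p * (∑ i, (xv1 i i - xv2 i i))
        - 2 * μ * (∑ i, ∑ j, (xS1 i j - xS2 i j) * (v1 i - v2 i))
        - 2 * μ * (∑ i, ∑ j, (S1 i j - S2 i j) * (xv1 i j - xv2 i j)) := by
    rw [Finset.sum_comm, Finset.sum_comm (f := fun i j => (xS1 i j - xS2 i j) * (v1 i - v2 i)),
      Finset.sum_comm (f := fun i j => (S1 i j - S2 i j) * (xv1 i j - xv2 i j))]
    rw [Finset.mul_sum, Finset.mul_sum, Finset.mul_sum]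
    simp only [← Finset.sum_add_distrib, ← Finset.sum_sub_distrib]
    refine Finset.sum_congr rfl fun j _ => ?_
    have e1 : ∑ i, ((xr1 j * (v1 i - v2 i) ^ 2 / 2
            + r1 * (v1 i - v2 i) * (xv1 i j - xv2 i j)) * v1 j
          + (1 / 2) * (r1 * ((v1 i - v2 i) * (v1 i - v2 i))) * xv1 j j)
        = (∑ i, (xr1 j * (v1 i - v2 i) ^ 2 / 2
            + r1 * (v1 i - v2 i) * (xv1 i j - xv2 i j))) * v1 j
          + (1 / 2) * (∑ i, r1 * ((v1 i - v2 i) * (v1 i - v2 i))) * xv1 j j := by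
      rw [Finset.sum_add_distrib, Finset.sum_mul, Finset.mul_sum, Finset.sum_mul]
    rw [e1, Finset.sum_add_distrib (f := fun i => (xS1 i j - xS2 i j) * (v1 i - v2 i))]
    ring
  have A2 : ∑ i, -(q1 i - q2 i) * (v1 i - v2 i) = - ∑ i, (q1 i - q2 i) * (v1 i - v2 i) := by
    rw [← Finset.sum_neg_distrib]
    exact Finset.sum_congr rfl fun i _ => by ring
  rw [C, Finset.sum_add_distrib]
  rw [Finset.sum_add_distrib, Finset.sum_sub_distrib, Finset.sum_sub_distrib,
    Finset.sum_add_distrib, Finset.sum_add_distrib, ← Finset.mul_sum, A2] at A'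
  linear_combination A' + B

lemma energy_identity {μ a γ : ℝ} {ρ₁ ρ₂ : ℝ × (Fin d → ℝ) → ℝ}
    {u₁ u₂ : ℝ × (Fin d → ℝ) → Fin d → ℝ}
    (hρ₁ : Sm ρ₁) (hρ₂ : Sm ρ₂) (hu₁ : ∀ i, Sm fun z => u₁ z i) (hu₂ : ∀ i, Sm fun z => u₂ z i)
    (hP₁ : Sm fun z => a * ρ₁ z ^ γ) (hP₂ : Sm fun z => a * ρ₂ z ^ γ) {z}
    (hm₁ : MassEq ρ₁ u₁ z) (hM₁ : MomEq μ a γ ρ₁ u₁ z)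
    (hm₂ : MassEq ρ₂ u₂ z) (hM₂ : MomEq μ a γ ρ₂ u₂ z) :
    tder (eden ρ₁ ρ₂ u₁ u₂) z + xdiv (flux μ a γ ρ₁ ρ₂ u₁ u₂) z = src μ a γ ρ₁ ρ₂ u₁ u₂ z := by
  have key := energy_alg μ (ρ₁ z) (ρ₂ z) (tder ρ₁ z) (tder ρ₂ z) (a * ρ₁ z ^ γ - a * ρ₂ z ^ γ)
    (fun j => xder j ρ₁ z) (fun j => xder j ρ₂ z) (u₁ z) (u₂ z)
    (fun i => tder (fun y => u₁ y i) z) (fun i => tder (fun y => u₂ y i) z)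
    (fun i => xder i (fun y => a * ρ₁ y ^ γ) z) (fun i => xder i (fun y => a * ρ₂ y ^ γ) z)
    (fun i j => xder j (fun y => u₁ y i) z) (fun i j => xder j (fun y => u₂ y i) z)
    (fun i j => ρ₁ z * xD u₁ z i j) (fun i j => ρ₂ z * xD u₂ z i j)
    (fun i j => xder j (fun y => ρ₁ y * xD u₁ y i j) z)
    (fun i j => xder j (fun y => ρ₂ y * xD u₂ y i j) z)
    (mass_expand hρ₁ hu₁ hm₁) (mass_expand hρ₂ hu₂ hm₂)
    (mom_expand hρ₁ hu₁ hm₁ hM₁) (mom_expand hρ₂ hu₂ hm₂ hM₂)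
  unfold src
  rw [← key]
  unfold xdiv
  congr 1
  · exact dd_eden hρ₁ hρ₂ hu₁ hu₂ _ _
  · refine Finset.sum_congr rfl fun j _ => ?_
    rw [xder_eq, dd_flux hρ₁ hρ₂ hu₁ hu₂ hP₁ hP₂, dd_eden hρ₁ hρ₂ hu₁ hu₂]
    rfl

lemma int_xdiv_zero {n : ℕ} (F : ℝ × (Fin (n + 1) → ℝ) → Fin (n + 1) → ℝ)
    (hF : ∀ j, Sm fun z => F z j) (hper : ∀ j, PeriodicX fun z => F z j) (t : ℝ) :
    ∫ x in Icc (0 : Fin (n + 1) → ℝ) 1, xdiv F (t, x) = 0 := by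
  have hc : Continuous fun x : Fin (n + 1) → ℝ => xdiv F (t, x) := by
    unfold xdiv
    refine continuous_finsetSum _ fun i _ => ?_
    exact (dd_sm (hF i) _).continuous.comp (by fun_prop)
  have h := integral_divergence_of_hasFDerivAt_off_countable' (E := ℝ) (0 : Fin (n + 1) → ℝ) 1
    (by intro i; simp) (fun i x => F (t, x) i)
    (fun i x => (fderiv ℝ (fun z => F z i) (t, x)).comp (ContinuousLinearMap.inr ℝ ℝ _))
    ∅ countable_empty
    (fun i => ((hF i).continuous.comp (by fun_prop : Continuous fun x : Fin (n + 1) → ℝ => (t, x))).continuousOn)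
    (fun x _ i => by
      have h1 := ((hF i).da (t, x)).hasFDerivAt
      exact h1.comp x (hasFDerivAt_prodMk_right t x))
    (by
      refine (hc.continuousOn.integrableOn_compact isCompact_Icc).congr_fun ?_ measurableSet_Icc
      intro x _
      simp [xdiv, xder])
  have e : ∀ x : Fin (n + 1) → ℝ, xdiv F (t, x) = ∑ i, ((fderiv ℝ (fun z => F z i) (t, x)).comp
      (ContinuousLinearMap.inr ℝ ℝ (Fin (n + 1) → ℝ))) (Pi.single i 1) := by
    intro x
    simp [xdiv, xder]
  simp only [e]
  rw [h]
  refine Finset.sum_eq_zero fun i _ => ?_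
  rw [sub_eq_zero]
  congr 1
  funext y
  have := hper i t (i.insertNth (0 : ℝ) y) (Pi.single i 1)
  simp only at this
  simp only [Pi.zero_apply, Pi.one_apply]
  rw [← this]
  congr 2
  ext j
  refine Fin.succAboveCases i ?_ (fun k => ?_) j
  · simp
  · simp

lemma hasDerivAt_int {f : ℝ × (Fin d → ℝ) → ℝ} (hf : Sm f) (t : ℝ) :
    HasDerivAt (fun s => ∫ x in Icc (0 : Fin d → ℝ) 1, f (s, x))
      (∫ x in Icc (0 : Fin d → ℝ) 1, tder f (t, x)) t := by
  have hc : Continuous (tder f) := (dd_sm hf _).continuous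
  obtain ⟨M, hM⟩ := ((isCompact_Icc (a := t - 1) (b := t + 1)).prod
    (isCompact_Icc (a := (0 : Fin d → ℝ)) (b := 1))).exists_bound_of_continuousOn hc.continuousOn
  have hmk : ∀ s : ℝ, Continuous fun x : Fin d → ℝ => (s, x) := fun s => by fun_prop
  refine (hasDerivAt_integral_of_dominated_loc_of_deriv_le (bound := fun _ => M)
    (F := fun s x => f (s, x)) (F' := fun s x => tder f (s, x))
    (Icc_mem_nhds (by linarith : t - 1 < t) (by linarith : t < t + 1)) ?_ ?_ ?_ ?_ ?_ ?_).2
  · exact Eventually.of_forall fun s => (hf.continuous.comp (hmk s)).aestronglyMeasurable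
  · exact (hf.continuous.comp (hmk t)).continuousOn.integrableOn_compact isCompact_Icc
  · exact (hc.comp (hmk t)).aestronglyMeasurable
  · refine (ae_restrict_iff' measurableSet_Icc).2 (Eventually.of_forall fun x hx s hs => ?_)
    exact hM (s, x) ⟨hs, hx⟩
  · exact continuous_const.continuousOn.integrableOn_compact isCompact_Icc
  · refine Eventually.of_forall fun x s _ => ?_
    have h1 := (hf.da (s, x)).hasFDerivAt
    have h2 := h1.comp_hasDerivAt s ((hasDerivAt_id s).prodMk (hasDerivAt_const s x))
    exact h2

lemma gronwall_zero {E E' : ℝ → ℝ} {C T : ℝ} (hE : ∀ t, HasDerivAt E (E' t) t)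
    (h0 : E 0 = 0) (hle : ∀ t ∈ Icc 0 T, E' t ≤ C * E t) : ∀ t ∈ Icc 0 T, E t ≤ 0 := by
  intro t ht
  have hd : ∀ s, HasDerivAt (fun s => E s * Real.exp (-C * s))
      (E' s * Real.exp (-C * s) + E s * (Real.exp (-C * s) * (-C))) s := by
    intro s
    have h1 : HasDerivAt (fun s : ℝ => -C * s) (-C) s := by
      simpa using (hasDerivAt_id s).const_mul (-C)
    exact (hE s).mul h1.exp
  have ha : AntitoneOn (fun s => E s * Real.exp (-C * s)) (Icc 0 T) := by
    refine antitoneOn_of_deriv_nonpos (convex_Icc 0 T)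
      (fun s _ => (hd s).continuousAt.continuousWithinAt)
      (fun s _ => (hd s).differentiableAt.differentiableWithinAt) fun s hs => ?_
    rw [(hd s).deriv]
    rw [interior_Icc] at hs
    have := hle s (Ioo_subset_Icc_self hs)
    have hp := Real.exp_pos (-C * s)
    nlinarith
  have := ha ⟨le_refl 0, ht.1.trans ht.2⟩ ht ht.1
  simp only [h0, zero_mul] at this
  have hp := Real.exp_pos (-C * t)
  by_contra hcon
  push Not at hcon
  have := mul_pos hcon hp
  linarith

lemma zero_of_int_zero {f : (Fin d → ℝ) → ℝ} (hf : Continuous f) (h0 : ∀ x, 0 ≤ f x)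
    (hi : ∫ x in Icc (0 : Fin d → ℝ) 1, f x ≤ 0) : ∀ x ∈ Icc (0 : Fin d → ℝ) 1, f x = 0 := by
  have h1 : ∫ x in Icc (0 : Fin d → ℝ) 1, f x = 0 :=
    le_antisymm hi (integral_nonneg h0)
  rw [setIntegral_eq_zero_iff_of_nonneg_ae (Eventually.of_forall h0)
    (hf.continuousOn.integrableOn_compact isCompact_Icc)] at h1
  have := Measure.eqOn_of_ae_eq h1 hf.continuousOn continuous_const.continuousOn (by
    rw [← Set.pi_univ_Icc, interior_pi_set finite_univ, closure_pi_set]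
    simp)
  exact this

lemma per_ext {f : ℝ × (Fin d → ℝ) → ℝ} (hp : PeriodicX f) {t : ℝ}
    (h : ∀ x ∈ Icc (0 : Fin d → ℝ) 1, f (t, x) = 0) (x : Fin d → ℝ) : f (t, x) = 0 := by
  have h1 := hp t x (fun i => - ⌊x i⌋)
  rw [← h1]
  refine h _ ⟨fun i => ?_, fun i => ?_⟩
  · have := Int.floor_le (x i)
    simp; linarith
  · have := Int.lt_floor_add_one (x i)
    simp; linarith

lemma press_lip {γ M : ℝ} (hγ : 1 < γ) {s t : ℝ} (hs : 0 < s) (ht : 0 < t)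
    (hsM : s ≤ M) (htM : t ≤ M) : |s ^ γ - t ^ γ| ≤ γ * M ^ (γ - 1) * |s - t| := by
  have := Convex.norm_image_sub_le_of_norm_hasDerivWithin_le (𝕜 := ℝ) (f := fun x : ℝ => x ^ γ)
    (f' := fun x => γ * x ^ (γ - 1)) (s := Ioc 0 M) (x := t) (y := s) (C := γ * M ^ (γ - 1))
    (fun x hx => (Real.hasDerivAt_rpow_const (Or.inl hx.1.ne')).hasDerivWithinAt)
    (fun x hx => by
      have h1 : 0 ≤ x ^ (γ - 1) := Real.rpow_nonneg hx.1.le _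
      rw [Real.norm_of_nonneg (mul_nonneg (by linarith) h1)]
      exact mul_le_mul_of_nonneg_left (Real.rpow_le_rpow hx.1.le hx.2 (by linarith)) (by linarith))
    (convex_Ioc 0 M) ⟨ht, htM⟩ ⟨hs, hsM⟩
  simpa [Real.norm_eq_abs] using this

lemma young1 {r w k M : ℝ} (hk : |k| ≤ M) : r * w * k ≤ M * (r ^ 2 + w ^ 2) := by
  have h1 := abs_le.1 hk
  have hM : 0 ≤ M := (abs_nonneg k).trans hk
  have : |r * w| * |k| ≤ (r ^ 2 + w ^ 2) * M := by
    refine mul_le_mul ?_ hk (abs_nonneg _) (by positivity)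
    rw [abs_le]
    constructor <;> nlinarith [sq_nonneg (r - w), sq_nonneg (r + w)]
  calc r * w * k ≤ |r * w * k| := le_abs_self _
    _ = |r * w| * |k| := abs_mul _ _
    _ ≤ _ := by linarith

lemma young2 {r D k m M : ℝ} (hm : 0 < m) (hk : |k| ≤ M) :
    k * r * D ≤ m * D ^ 2 + M ^ 2 / m * r ^ 2 := by
  have h2 : k ^ 2 ≤ M ^ 2 := by
    rw [← sq_abs k]; exact pow_le_pow_left₀ (abs_nonneg _) hk 2
  have h3 : k ^ 2 / m * r ^ 2 ≤ M ^ 2 / m * r ^ 2 := by gcongr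
  have h4 : k * r * D ≤ m * D ^ 2 + k ^ 2 / m * r ^ 2 := by
    have : m * D ^ 2 + k ^ 2 / m * r ^ 2 - k * r * D
        = ((m * D - k * r) ^ 2 + m * D ^ 2 * m + k ^ 2 * r ^ 2) / (2 * m) := by
      field_simp; ring
    have : 0 ≤ m * D ^ 2 + k ^ 2 / m * r ^ 2 - k * r * D := by rw [this]; positivity
    linarith
  linarith

lemma src_alg {μ c M r1 r2 p : ℝ} (w A2 xr2 : Fin d → ℝ) (xv1 xv2 : Fin d → Fin d → ℝ)
    (hμ : 0 < μ) (hc : 0 < c) (hcr : c ≤ r1) (hr1 : |r1| ≤ M) (hr2 : |r2| ≤ M)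
    (hp : |p| ≤ M * |r1 - r2|) (hA2 : ∀ i, |A2 i| ≤ M) (hxr2 : ∀ i, |xr2 i| ≤ M)
    (hxv1 : ∀ i j, |xv1 i j| ≤ M) (hxv2 : ∀ i j, |xv2 i j| ≤ M) :
    - (∑ i, ∑ j, r1 * w i * w j * xv2 i j)
    - (∑ i, (r1 - r2) * w i * A2 i)
    + (p - r2 * (r1 - r2)) * (∑ i, (xv1 i i - xv2 i i))
    - 2 * μ * (∑ i, ∑ j, (r1 * ((xv1 i j + xv1 j i) / 2) - r2 * ((xv2 i j + xv2 j i) / 2))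
        * (xv1 i j - xv2 i j))
    - (r1 - r2) ^ 2 / 2 * (∑ i, xv1 i i)
    - ∑ i, (r1 - r2) * w i * xr2 i ≤
    (2 * d * M ^ 2 + 2 * M) * (∑ i, w i ^ 2) +
      (2 * d * M + d * ((2 * M) ^ 2 / (μ * c)) + d * d * ((2 * μ * M) ^ 2 / (μ * c)) + d * M)
        * (r1 - r2) ^ 2 := by
  have hM : 0 ≤ M := (abs_nonneg _).trans hr1
  set r := r1 - r2 with hr
  let D : Fin d → Fin d → ℝ := fun i j => ((xv1 i j - xv2 i j) + (xv1 j i - xv2 j i)) / 2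
  have hsumc : ∀ k : ℝ, ∑ _i : Fin d, k = d * k := by intro k; simp
  have t1 : - (∑ i, ∑ j, r1 * w i * w j * xv2 i j) ≤ 2 * d * M ^ 2 * ∑ i, w i ^ 2 := by
    have : ∀ i j, -(r1 * w i * w j * xv2 i j) ≤ M ^ 2 * w i ^ 2 + M ^ 2 * w j ^ 2 := by
      intro i j
      have hk : |-(r1 * xv2 i j)| ≤ M ^ 2 := by
        rw [abs_neg, abs_mul, sq]; exact mul_le_mul hr1 (hxv2 i j) (abs_nonneg _) hM
      have := young1 (r := w i) (w := w j) hk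
      linarith
    calc - (∑ i, ∑ j, r1 * w i * w j * xv2 i j)
        = ∑ i, ∑ j, -(r1 * w i * w j * xv2 i j) := by simp
      _ ≤ ∑ i, ∑ j, (M ^ 2 * w i ^ 2 + M ^ 2 * w j ^ 2) :=
          Finset.sum_le_sum fun i _ => Finset.sum_le_sum fun j _ => this i j
      _ = _ := by
          simp only [Finset.sum_add_distrib, hsumc, ← Finset.mul_sum]; ring
  have t2 : ∀ B : Fin d → ℝ, (∀ i, |B i| ≤ M) → - (∑ i, r * w i * B i) ≤
      M * (∑ i, w i ^ 2) + d * M * r ^ 2 := by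
    intro B hB
    calc - (∑ i, r * w i * B i) = ∑ i, r * w i * (- B i) := by simp
      _ ≤ ∑ i, M * (r ^ 2 + w i ^ 2) :=
          Finset.sum_le_sum fun i _ => young1 (by rw [abs_neg]; exact hB i)
      _ = _ := by
          simp only [mul_add, Finset.sum_add_distrib, hsumc, ← Finset.mul_sum]; ring
  have t3 : - r ^ 2 / 2 * (∑ i, xv1 i i) ≤ d * M * r ^ 2 := by
    have : - (∑ i, xv1 i i) ≤ d * M := by
      rw [← Finset.sum_neg_distrib, ← hsumc]
      exact Finset.sum_le_sum fun i _ => by linarith [(abs_le.1 (hxv1 i i)).1]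
    have hdM : 0 ≤ d * M := by positivity
    nlinarith [sq_nonneg r, mul_le_mul_of_nonneg_left this (sq_nonneg r),
      mul_nonneg hdM (sq_nonneg r)]
  have t4 : (p - r2 * r) * (∑ i, (xv1 i i - xv2 i i)) ≤
      μ * c * (∑ i, ∑ j, D i j ^ 2) + d * ((2 * M) ^ 2 / (μ * c)) * r ^ 2 := by
    have hk : |p - r2 * r| ≤ 2 * M * |r| := by
      calc |p - r2 * r| ≤ |p| + |r2 * r| := abs_sub _ _
        _ ≤ M * |r| + M * |r| := by
            rw [abs_mul]; gcongr
        _ = _ := by ring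
    have h1 : ∀ i, (p - r2 * r) * (xv1 i i - xv2 i i) ≤
        μ * c * D i i ^ 2 + (2 * M) ^ 2 / (μ * c) * r ^ 2 := by
      intro i
      have := young2 (r := 1) (D := D i i) (mul_pos hμ hc) hk
      have hD : D i i = xv1 i i - xv2 i i := by simp only [D]; ring
      rw [mul_pow, sq_abs] at this
      rw [← hD]
      calc _ = (p - r2 * r) * 1 * D i i := by ring
        _ ≤ _ := this
        _ = _ := by ring
    have h2 : ∑ i, D i i ^ 2 ≤ ∑ i, ∑ j, D i j ^ 2 :=
      Finset.sum_le_sum fun i _ => Finset.single_le_sum (f := fun j => D i j ^ 2)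
        (fun j _ => sq_nonneg _) (Finset.mem_univ i)
    calc _ = ∑ i, (p - r2 * r) * (xv1 i i - xv2 i i) := Finset.mul_sum _ _ _
      _ ≤ ∑ i, (μ * c * D i i ^ 2 + (2 * M) ^ 2 / (μ * c) * r ^ 2) :=
          Finset.sum_le_sum fun i _ => h1 i
      _ = μ * c * (∑ i, D i i ^ 2) + d * ((2 * M) ^ 2 / (μ * c)) * r ^ 2 := by
          rw [Finset.sum_add_distrib, hsumc, Finset.mul_sum]; ring
      _ ≤ _ := by gcongr
  have t5 : - 2 * μ * (∑ i, ∑ j, (r1 * ((xv1 i j + xv1 j i) / 2) - r2 * ((xv2 i j + xv2 j i) / 2))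
        * (xv1 i j - xv2 i j)) ≤
      - (μ * c) * (∑ i, ∑ j, D i j ^ 2) + d * d * ((2 * μ * M) ^ 2 / (μ * c)) * r ^ 2 := by
    have hsym : ∑ i, ∑ j, (r1 * ((xv1 i j + xv1 j i) / 2) - r2 * ((xv2 i j + xv2 j i) / 2))
        * (xv1 i j - xv2 i j) =
        ∑ i, ∑ j, (r1 * ((xv1 i j + xv1 j i) / 2) - r2 * ((xv2 i j + xv2 j i) / 2)) * D i j := by
      have hs := Finset.sum_comm (s := Finset.univ) (t := Finset.univ) (f := fun i j =>
        (r1 * ((xv1 i j + xv1 j i) / 2) - r2 * ((xv2 i j + xv2 j i) / 2)) * (xv1 i j - xv2 i j))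
      have : ∑ i, ∑ j, (r1 * ((xv1 i j + xv1 j i) / 2) - r2 * ((xv2 i j + xv2 j i) / 2)) * D i j
        = (1 / 2) * (∑ i, ∑ j,
            (r1 * ((xv1 i j + xv1 j i) / 2) - r2 * ((xv2 i j + xv2 j i) / 2))
              * (xv1 i j - xv2 i j))
          + (1 / 2) * ∑ i, ∑ j,
            (r1 * ((xv1 j i + xv1 i j) / 2) - r2 * ((xv2 j i + xv2 i j) / 2))
              * (xv1 j i - xv2 j i) := by
        simp only [Finset.mul_sum, ← Finset.sum_add_distrib]
        refine Finset.sum_congr rfl fun i _ => Finset.sum_congr rfl fun j _ => ?_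
        simp only [D]; ring
      rw [this, ← hs]; ring
    rw [hsym]
    have h1 : ∀ i j, - 2 * μ * ((r1 * ((xv1 i j + xv1 j i) / 2)
        - r2 * ((xv2 i j + xv2 j i) / 2)) * D i j) ≤
        - (μ * c) * D i j ^ 2 + (2 * μ * M) ^ 2 / (μ * c) * r ^ 2 := by
      intro i j
      have hk : |- 2 * μ * ((xv2 i j + xv2 j i) / 2)| ≤ 2 * μ * M := by
        have ha := abs_le.1 (hxv2 i j)
        have hb := abs_le.1 (hxv2 j i)
        rw [abs_le]
        constructor <;> nlinarith
      have h2 := young2 (r := r) (D := D i j) (mul_pos hμ hc) hk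
      have h3 : (r1 * ((xv1 i j + xv1 j i) / 2) - r2 * ((xv2 i j + xv2 j i) / 2))
          = r1 * D i j + r * ((xv2 i j + xv2 j i) / 2) := by
        simp only [D, hr]; ring
      have h4 : μ * c * D i j ^ 2 ≤ μ * r1 * D i j ^ 2 := by gcongr
      rw [h3]
      nlinarith
    calc _ = ∑ i, ∑ j, - 2 * μ * ((r1 * ((xv1 i j + xv1 j i) / 2)
            - r2 * ((xv2 i j + xv2 j i) / 2)) * D i j) := by simp only [Finset.mul_sum]
      _ ≤ ∑ i, ∑ j, (- (μ * c) * D i j ^ 2 + (2 * μ * M) ^ 2 / (μ * c) * r ^ 2) :=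
          Finset.sum_le_sum fun i _ => Finset.sum_le_sum fun j _ => h1 i j
      _ = _ := by
          simp only [Finset.sum_add_distrib, hsumc, ← Finset.mul_sum]; ring
  have t2a := t2 A2 hA2
  have t2b := t2 xr2 hxr2
  linarith

lemma cont_bound {f : ℝ × (Fin d → ℝ) → ℝ} (hf : Continuous f) (T : ℝ) :
    ∃ M, ∀ z ∈ Icc 0 T ×ˢ Icc (0 : Fin d → ℝ) 1, |f z| ≤ M := by
  obtain ⟨M, hM⟩ := (isCompact_Icc.prod isCompact_Icc).exists_bound_of_continuousOn
    (s := Icc 0 T ×ˢ Icc (0 : Fin d → ℝ) 1) hf.continuousOn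
  exact ⟨M, hM⟩

lemma cont_bound_fam {ι : Type} [Fintype ι] {f : ι → ℝ × (Fin d → ℝ) → ℝ}
    (hf : ∀ i, Continuous (f i)) (T : ℝ) :
    ∃ M, ∀ z ∈ Icc 0 T ×ˢ Icc (0 : Fin d → ℝ) 1, ∀ i, |f i z| ≤ M := by
  choose M hM using fun i => cont_bound (hf i) T
  refine ⟨∑ i, |M i|, fun z hz i => ?_⟩
  refine ((hM i z hz).trans (le_abs_self _)).trans ?_
  exact Finset.single_le_sum (f := fun i => |M i|) (fun j _ => abs_nonneg _) (Finset.mem_univ i)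

lemma xder_cont {f : ℝ × (Fin d → ℝ) → ℝ} (hf : Sm f) (i : Fin d) :
    Continuous fun z => xder i f z := (dd_sm hf _).continuous

lemma tder_cont {f : ℝ × (Fin d → ℝ) → ℝ} (hf : Sm f) :
    Continuous fun z => tder f z := (dd_sm hf _).continuous

lemma src_bound {μ a γ T c₁ c₂ : ℝ} {ρ₁ ρ₂ : ℝ × (Fin d → ℝ) → ℝ}
    {u₁ u₂ : ℝ × (Fin d → ℝ) → Fin d → ℝ} (hμ : 0 < μ) (ha : 0 < a) (hγ : 1 < γ)
    (hρ₁ : Sm ρ₁) (hρ₂ : Sm ρ₂) (hu₁ : ∀ i, Sm fun z => u₁ z i) (hu₂ : ∀ i, Sm fun z => u₂ z i)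
    (hc₁ : 0 < c₁) (hc₂ : 0 < c₂) (hρ₁lb : ∀ z, c₁ ≤ ρ₁ z) (hρ₂lb : ∀ z, c₂ ≤ ρ₂ z) :
    ∃ C, ∀ z ∈ Icc 0 T ×ˢ Icc (0 : Fin d → ℝ) 1,
      src μ a γ ρ₁ ρ₂ u₁ u₂ z ≤ C * eden ρ₁ ρ₂ u₁ u₂ z := by
  obtain ⟨M1, hM1⟩ := cont_bound hρ₁.continuous T
  obtain ⟨M2, hM2⟩ := cont_bound hρ₂.continuous T
  obtain ⟨M3, hM3⟩ := cont_bound_fam (f := fun i z =>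
    tder (fun y => u₂ y i) z + ∑ j, u₂ z j * xder j (fun y => u₂ y i) z) (fun i =>
      (tder_cont (hu₂ i)).add (continuous_finsetSum _ fun j _ =>
        (hu₂ j).continuous.mul (xder_cont (hu₂ i) j))) T
  obtain ⟨M4, hM4⟩ := cont_bound_fam (f := fun i z => xder i ρ₂ z) (fun i => xder_cont hρ₂ i) T
  obtain ⟨M5, hM5⟩ := cont_bound_fam (f := fun (p : Fin d × Fin d) z =>
    xder p.2 (fun y => u₁ y p.1) z) (fun p => xder_cont (hu₁ p.1) p.2) T
  obtain ⟨M6, hM6⟩ := cont_bound_fam (f := fun (p : Fin d × Fin d) z =>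
    xder p.2 (fun y => u₂ y p.1) z) (fun p => xder_cont (hu₂ p.1) p.2) T
  let N := max M1 M2
  let M := |M1| + |M2| + |M3| + |M4| + |M5| + |M6| + |a * (γ * N ^ (γ - 1))|
  have b1 := le_abs_self M1
  have b2 := le_abs_self M2
  have b3 := le_abs_self M3
  have b4 := le_abs_self M4
  have b5 := le_abs_self M5
  have b6 := le_abs_self M6
  have b7 := le_abs_self (a * (γ * N ^ (γ - 1)))
  have n1 := abs_nonneg M1
  have n2 := abs_nonneg M2
  have n3 := abs_nonneg M3
  have n4 := abs_nonneg M4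
  have n5 := abs_nonneg M5
  have n6 := abs_nonneg M6
  have n7 := abs_nonneg (a * (γ * N ^ (γ - 1)))
  have hM : M = |M1| + |M2| + |M3| + |M4| + |M5| + |M6| + |a * (γ * N ^ (γ - 1))| := rfl
  have hM0 : 0 ≤ M := by linarith
  clear_value M
  obtain ⟨α, hα⟩ : ∃ α, α = (2 * d * M ^ 2 + 2 * M) := ⟨_, rfl⟩
  obtain ⟨β, hβ⟩ : ∃ β, β = (2 * d * M + d * ((2 * M) ^ 2 / (μ * c₁))
    + d * d * ((2 * μ * M) ^ 2 / (μ * c₁)) + d * M) := ⟨_, rfl⟩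
  have hα0 : 0 ≤ α := by rw [hα]; positivity
  have hβ0 : 0 ≤ β := by rw [hβ]; positivity
  refine ⟨2 * (α / c₁ + β), fun z hz => ?_⟩
  have hp : |a * ρ₁ z ^ γ - a * ρ₂ z ^ γ| ≤ M * |ρ₁ z - ρ₂ z| := by
    rw [← mul_sub, abs_mul, abs_of_pos ha]
    have h1 := press_lip hγ (hc₁.trans_le (hρ₁lb z)) (hc₂.trans_le (hρ₂lb z)) (M := N)
      ((le_abs_self _).trans ((hM1 z hz).trans (le_max_left _ _)))
      ((le_abs_self _).trans ((hM2 z hz).trans (le_max_right _ _)))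
    calc _ ≤ a * (γ * N ^ (γ - 1) * |ρ₁ z - ρ₂ z|) := mul_le_mul_of_nonneg_left h1 ha.le
      _ = a * (γ * N ^ (γ - 1)) * |ρ₁ z - ρ₂ z| := by ring
      _ ≤ _ := mul_le_mul_of_nonneg_right (by linarith) (abs_nonneg _)
  have key := src_alg (fun i => u₁ z i - u₂ z i)
    (fun i => tder (fun y => u₂ y i) z + ∑ j, u₂ z j * xder j (fun y => u₂ y i) z)
    (fun i => xder i ρ₂ z) (fun i j => xder j (fun y => u₁ y i) z)
    (fun i j => xder j (fun y => u₂ y i) z) hμ hc₁ (hρ₁lb z)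
    ((hM1 z hz).trans (by linarith)) ((hM2 z hz).trans (by linarith)) hp
    (fun i => (hM3 z hz i).trans (by linarith)) (fun i => (hM4 z hz i).trans (by linarith))
    (fun i j => (hM5 z hz (i, j)).trans (by linarith))
    (fun i j => (hM6 z hz (i, j)).trans (by linarith))
  rw [← hα, ← hβ] at key
  have hsrc : src μ a γ ρ₁ ρ₂ u₁ u₂ z ≤ α * (∑ i, (u₁ z i - u₂ z i) ^ 2)
      + β * (ρ₁ z - ρ₂ z) ^ 2 := key
  refine hsrc.trans ?_
  have hW : 0 ≤ ∑ i, (u₁ z i - u₂ z i) ^ 2 := Finset.sum_nonneg fun i _ => sq_nonneg _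
  have he : eden ρ₁ ρ₂ u₁ u₂ z
      = (1 / 2) * (ρ₁ z * (∑ i, (u₁ z i - u₂ z i) ^ 2) + (ρ₁ z - ρ₂ z) ^ 2) := by
    unfold eden
    rw [Finset.mul_sum]
    simp only [sq]
  rw [he]
  set W := ∑ i, (u₁ z i - u₂ z i) ^ 2
  have h1 : c₁ * W ≤ ρ₁ z * W := mul_le_mul_of_nonneg_right (hρ₁lb z) hW
  have hq : 0 ≤ α / c₁ := by positivity
  have h2 : α * W = α / c₁ * (c₁ * W) := by field_simp
  rw [h2]
  have h3 := mul_le_mul_of_nonneg_left h1 hq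
  have h4 := mul_nonneg hβ0 (mul_nonneg (hc₁.le.trans (hρ₁lb z)) hW)
  have h5 := mul_nonneg hq (sq_nonneg (ρ₁ z - ρ₂ z))
  nlinarith

/-- Uniqueness of smooth, `ℤᵈ`-periodic, uniformly positive
solutions of compressible Navier–Stokes with `ν(ρ) = μρ`, `λ(ρ) = 0` and
`p(s) = a s^γ`: two such solutions with the same initial data coincide on
`[0,T] × ℝᵈ`. -/
theorem weak_strong_uniqueness
    {d : ℕ} (hd : 1 ≤ d) (μ a γ T : ℝ)
    (hμ : 0 < μ) (ha : 0 < a) (hγ : 1 < γ) (hT : 0 ≤ T)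
    (ρ₁ ρ₂ : ℝ × (Fin d → ℝ) → ℝ) (u₁ u₂ : ℝ × (Fin d → ℝ) → Fin d → ℝ)
    (hρ₁ : ContDiff ℝ (⊤ : ℕ∞) ρ₁) (hu₁ : ContDiff ℝ (⊤ : ℕ∞) u₁)
    (hρ₂ : ContDiff ℝ (⊤ : ℕ∞) ρ₂) (hu₂ : ContDiff ℝ (⊤ : ℕ∞) u₂)
    (hρ₁per : PeriodicX ρ₁) (hu₁per : ∀ i, PeriodicX fun z => u₁ z i)
    (hρ₂per : PeriodicX ρ₂) (hu₂per : ∀ i, PeriodicX fun z => u₂ z i)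
    (c₁ c₂ : ℝ) (hc₁ : 0 < c₁) (hc₂ : 0 < c₂)
    (hρ₁lb : ∀ z, c₁ ≤ ρ₁ z) (hρ₂lb : ∀ z, c₂ ≤ ρ₂ z)
    (hmass₁ : ∀ t ∈ Set.Icc 0 T, ∀ x : Fin d → ℝ, MassEq ρ₁ u₁ (t, x))
    (hmom₁ : ∀ t ∈ Set.Icc 0 T, ∀ x : Fin d → ℝ, MomEq μ a γ ρ₁ u₁ (t, x))
    (hmass₂ : ∀ t ∈ Set.Icc 0 T, ∀ x : Fin d → ℝ, MassEq ρ₂ u₂ (t, x))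
    (hmom₂ : ∀ t ∈ Set.Icc 0 T, ∀ x : Fin d → ℝ, MomEq μ a γ ρ₂ u₂ (t, x))
    (hinit : ∀ x : Fin d → ℝ, ρ₁ (0, x) = ρ₂ (0, x) ∧ u₁ (0, x) = u₂ (0, x)) :
    ∀ t ∈ Set.Icc 0 T, ∀ x : Fin d → ℝ,
      ρ₁ (t, x) = ρ₂ (t, x) ∧ u₁ (t, x) = u₂ (t, x) := by
  obtain ⟨n, rfl⟩ : ∃ n, d = n + 1 := ⟨d - 1, by omega⟩
  have hv₁ : ∀ i, Sm fun z => u₁ z i := contDiff_pi.1 hu₁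
  have hv₂ : ∀ i, Sm fun z => u₂ z i := contDiff_pi.1 hu₂
  have hpos₁ : ∀ z, 0 < ρ₁ z := fun z => hc₁.trans_le (hρ₁lb z)
  have hpos₂ : ∀ z, 0 < ρ₂ z := fun z => hc₂.trans_le (hρ₂lb z)
  have hP₁ : Sm fun z => a * ρ₁ z ^ γ :=
    contDiff_const.mul (hρ₁.rpow_const_of_ne fun z => (hpos₁ z).ne')
  have hP₂ : Sm fun z => a * ρ₂ z ^ γ :=
    contDiff_const.mul (hρ₂.rpow_const_of_ne fun z => (hpos₂ z).ne')
  have hEs := eden_sm hρ₁ hρ₂ hv₁ hv₂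
  have hFs := fun j => flux_sm (μ := μ) hρ₁ hρ₂ hv₁ hv₂ hP₁ hP₂ j
  have hEper : PeriodicX (eden ρ₁ ρ₂ u₁ u₂) := by
    intro t x k
    have h1 := fun i => hu₁per i t x k
    have h2 := fun i => hu₂per i t x k
    simp only at h1 h2
    simp only [eden, hρ₁per t x k, hρ₂per t x k, h1, h2]
  have hFper : ∀ j, PeriodicX fun z => flux μ a γ ρ₁ ρ₂ u₁ u₂ z j := by
    intro j t x k
    have h1 := fun i => hu₁per i t x k
    have h2 := fun i => hu₂per i t x k
    have h3 := fun i j => dd_per (hu₁per i) (0, Pi.single j 1) t x k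
    have h4 := fun i j => dd_per (hu₂per i) (0, Pi.single j 1) t x k
    simp only at h1 h2
    simp only [flux, xD, xjac, xder_eq, hEper t x k, hρ₁per t x k, hρ₂per t x k, h1, h2, h3, h4]
  obtain ⟨C, hC⟩ := src_bound (T := T) hμ ha hγ hρ₁ hρ₂ hv₁ hv₂ hc₁ hc₂ hρ₁lb hρ₂lb
  have hmk : ∀ s : ℝ, Continuous fun x : Fin (n + 1) → ℝ => (s, x) := fun s => by fun_prop
  have hint : ∀ (f : ℝ × (Fin (n + 1) → ℝ) → ℝ), Continuous f → ∀ t : ℝ,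
      IntegrableOn (fun x => f (t, x)) (Icc (0 : Fin (n + 1) → ℝ) 1) := fun f hf t =>
    (hf.comp (hmk t)).continuousOn.integrableOn_compact isCompact_Icc
  have htc : Continuous (tder (eden ρ₁ ρ₂ u₁ u₂)) := tder_cont hEs
  have hxc : Continuous (xdiv (flux μ a γ ρ₁ ρ₂ u₁ u₂)) :=
    continuous_finsetSum _ fun j _ => xder_cont (hFs j) j
  have hE0 : ∀ z, 0 ≤ eden ρ₁ ρ₂ u₁ u₂ z := by
    intro z
    unfold eden
    have := Finset.sum_nonneg (s := Finset.univ) fun i _ =>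
      mul_nonneg (hpos₁ z).le (mul_self_nonneg (u₁ z i - u₂ z i))
    have := mul_self_nonneg (ρ₁ z - ρ₂ z)
    linarith
  have hG := gronwall_zero (T := T) (C := C) (hasDerivAt_int hEs) (by
      have : ∀ x, eden ρ₁ ρ₂ u₁ u₂ (0, x) = 0 := by
        intro x
        simp [eden, (hinit x).1, (hinit x).2]
      simp [this]) (by
      intro t ht
      have h0 := int_xdiv_zero _ hFs hFper t
      rw [← add_zero (∫ x in Icc (0 : Fin (n + 1) → ℝ) 1, tder (eden ρ₁ ρ₂ u₁ u₂) (t, x)), ← h0,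
        ← integral_add (hint _ htc t) (hint _ hxc t), ← integral_const_mul]
      refine setIntegral_mono_on ((hint _ htc t).add (hint _ hxc t))
        ((hint _ hEs.continuous t).const_mul C) measurableSet_Icc fun x hx => ?_
      rw [energy_identity hρ₁ hρ₂ hv₁ hv₂ hP₁ hP₂ (hmass₁ t ht x) (hmom₁ t ht x)
        (hmass₂ t ht x) (hmom₂ t ht x)]
      exact hC (t, x) ⟨ht, hx⟩)
  intro t ht x
  have hz : eden ρ₁ ρ₂ u₁ u₂ (t, x) = 0 :=
    per_ext hEper (zero_of_int_zero (hEs.continuous.comp (hmk t)) (fun y => hE0 (t, y)) (hG t ht)) x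
  unfold eden at hz
  have hS0 : ∀ i ∈ (Finset.univ : Finset (Fin (n + 1))),
      0 ≤ ρ₁ (t, x) * ((u₁ (t, x) i - u₂ (t, x) i) * (u₁ (t, x) i - u₂ (t, x) i)) :=
    fun i _ => mul_nonneg (hpos₁ _).le (mul_self_nonneg _)
  have hS := Finset.sum_nonneg hS0
  have hr := mul_self_nonneg (ρ₁ (t, x) - ρ₂ (t, x))
  constructor
  · have : (ρ₁ (t, x) - ρ₂ (t, x)) * (ρ₁ (t, x) - ρ₂ (t, x)) = 0 := by linarith
    exact sub_eq_zero.1 (mul_self_eq_zero.1 this)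
  · have h1 := (Finset.sum_eq_zero_iff_of_nonneg hS0).1 (by linarith)
    funext i
    have h2 := h1 i (Finset.mem_univ i)
    rcases mul_eq_zero.1 h2 with h3 | h3
    · exact absurd h3 (hpos₁ _).ne'
    · exact sub_eq_zero.1 (mul_self_eq_zero.1 h3)
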